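/- Let (w_n) be a real sequence satisfying w_{n+1} = w_n − w_n³ for all n ∈ ℕ, with initial value satisfying 3w₀² ≤ 1. Then for all n ∈ ℕ, |w_n| ≤ |w₀| / √(1 + 2w₀²·n). In particular |w_n| = O(n^{−1/2}) as n → ∞. -/

import Mathlib

theorem sq_mul_le_of_cubic_recursion {w : ℕ → ℝ} (hw : ∀ n, w (n + 1) = w n - (w n) ^ 3)
    (h0 : 2 * (w 0) ^ 2 ≤ 3) (n : ℕ) :
    (w n) ^ 2 * (1 + 2 * (w 0) ^ 2 * n) ≤ (w 0) ^ 2 := by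
  induction n with
  | zero => simp
  | succ n ih =>
    have hx : 2 * (w n) ^ 2 ≤ 3 := by
      have : 0 ≤ (w n) ^ 2 * (2 * (w 0) ^ 2 * n) := by positivity
      linarith
    calc (w (n + 1)) ^ 2 * (1 + 2 * (w 0) ^ 2 * (n + 1 : ℕ))
        = (1 - (w n) ^ 2) ^ 2 *
            ((w n) ^ 2 * (1 + 2 * (w 0) ^ 2 * n) + 2 * (w 0) ^ 2 * (w n) ^ 2) := by
          rw [hw]; push_cast; ring
      _ ≤ (1 - (w n) ^ 2) ^ 2 * ((w 0) ^ 2 + 2 * (w 0) ^ 2 * (w n) ^ 2) := by gcongr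
      _ = (w 0) ^ 2 - (w 0) ^ 2 * ((w n) ^ 4 * (3 - 2 * (w n) ^ 2)) := by ring
      _ ≤ (w 0) ^ 2 := sub_le_self _ <|
          mul_nonneg (sq_nonneg _) (mul_nonneg (by positivity) (by linarith))

theorem abs_le_div_sqrt_of_sq_mul_le {x y t : ℝ} (ht : 0 < t) (h : x ^ 2 * t ≤ y ^ 2) :
    |x| ≤ |y| / Real.sqrt t := by
  rw [le_div_iff₀ (Real.sqrt_pos.2 ht)]
  refine abs_le_of_sq_le_sq' ?_ (abs_nonneg y) |>.2
  rwa [mul_pow, sq_abs, sq_abs, Real.sq_sqrt ht.le]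

/-- for the recursion `w_{n+1} = w_n - w_n³` with `3w₀² ≤ 1`, one
has `|w_n| ≤ |w₀| / √(1 + 2w₀²n)` for all `n`; in particular
`|w_n| = O(n^{-1/2})`. -/
theorem stmt_19 (w : ℕ → ℝ) (hw : ∀ n, w (n + 1) = w n - (w n) ^ 3)
    (h0 : 3 * (w 0) ^ 2 ≤ 1) :
    (∀ n : ℕ, |w n| ≤ |w 0| / Real.sqrt (1 + 2 * (w 0) ^ 2 * n)) ∧
    ∃ C : ℝ, ∀ n : ℕ, 1 ≤ n → |w n| ≤ C / Real.sqrt n := by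
  have key := sq_mul_le_of_cubic_recursion hw (by linarith [sq_nonneg (w 0)])
  refine ⟨fun n => abs_le_div_sqrt_of_sq_mul_le (by positivity) (key n), |1|, fun n hn => ?_⟩
  refine abs_le_div_sqrt_of_sq_mul_le (by exact_mod_cast hn) ?_
  have hk := key n
  rcases (sq_nonneg (w 0)).eq_or_lt with ha | ha
  · rw [← ha] at hk
    have : (w n) ^ 2 = 0 := le_antisymm (by linarith) (sq_nonneg _)
    simp [this]
  · refine le_of_mul_le_mul_left ?_ ha
    have : 0 ≤ (w 0) ^ 2 * ((w n) ^ 2 * n) := by positivity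
    linarith [sq_nonneg (w n)]
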